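/- Any two almost conjugate finite subgroups of SU(2) are conjugate in SU(2). -/

import Mathlib

/-- Two subgroups `Γ₁`, `Γ₂` of a group `G` are almost conjugate if there is a bijection
`φ : Γ₁ → Γ₂` such that every `γ ∈ Γ₁` is conjugate in `G` to `φ γ`. -/
def AlmostConjugate {G : Type*} [Group G] (Γ₁ Γ₂ : Subgroup G) : Prop :=
  ∃ φ : Γ₁ ≃ Γ₂, ∀ γ : Γ₁, IsConj (γ : G) ((φ γ : Γ₂) : G)

/-!
In `SU(2)` an element is determined up to conjugacy by its real part, and a noncommuting pair
`(a, b)` up to simultaneous conjugacy by the real parts of `a`, `b` and `a * b`. Hence it suffices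
to find generators of a finite subgroup `Γ` whose traces are determined by the real parts occurring
in `Γ`, which avoids the ADE classification.

Let `a ≠ 1` in `Γ` have the largest possible real part `c`; it generates its centralizer in `Γ`. If
`c ≤ 0`, or if `a` and `a⁻¹` are the only elements of real part `c`, then every element of `Γ` not
commuting with `a` inverts it, and `Γ` is generated by `a`, or by `a` and some `b` such that `b` and
`a * b` have real part `0`. Otherwise choose `b` of real part `c` not commuting with `a`. If `a` and
`b` did not generate `Γ`, an element of `Γ` outside the subgroup they generate, closest to `1` and
then rotated by powers of `a` to lie as close as possible to `b`, would be moved still closer to `1`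
by a multiplication by `a`, `b` or an inverse. Finally `a ^ 3`, `a ^ 5` and the commutator of `a`
and `b` have real part at most `c` unless they are trivial, which forces `c` to be `cos (π / 3)`,
`cos (π / 4)` or `cos (π / 5)`, and the same argument for `a * b` and `a * b⁻¹` shows that one of
them has real part `1 / 2`.
-/

namespace AlmostConjugate

variable {G : Type*} [Group G] {Γ₁ Γ₂ : Subgroup G}

theorem symm (h : AlmostConjugate Γ₁ Γ₂) : AlmostConjugate Γ₂ Γ₁ := by
  obtain ⟨φ, hφ⟩ := h
  exact ⟨φ.symm, fun γ => by simpa using (hφ (φ.symm γ)).symm⟩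

theorem natCard_eq (h : AlmostConjugate Γ₁ Γ₂) : Nat.card Γ₁ = Nat.card Γ₂ := by
  obtain ⟨φ, -⟩ := h
  exact Nat.card_congr φ

theorem exists_mem_isConj (h : AlmostConjugate Γ₁ Γ₂) {x : G} (hx : x ∈ Γ₁) :
    ∃ y ∈ Γ₂, IsConj x y := by
  obtain ⟨φ, hφ⟩ := h
  exact ⟨φ ⟨x, hx⟩, (φ ⟨x, hx⟩).2, hφ ⟨x, hx⟩⟩

theorem ncard_eq_of_isConj (h : AlmostConjugate Γ₁ Γ₂) {p : G → Prop}
    (hp : ∀ x y, IsConj x y → (p x ↔ p y)) :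
    {x | x ∈ Γ₁ ∧ p x}.ncard = {x | x ∈ Γ₂ ∧ p x}.ncard := by
  obtain ⟨φ, hφ⟩ := h
  refine Set.ncard_congr (fun x hx => φ ⟨x, hx.1⟩)
    (fun x hx => ⟨(φ ⟨x, hx.1⟩).2, (hp _ _ (hφ ⟨x, hx.1⟩)).1 hx.2⟩)
    (fun x y hx hy hxy => congrArg Subtype.val (φ.injective (Subtype.ext hxy)))
    fun y hy => ⟨φ.symm ⟨y, hy.1⟩, ⟨(φ.symm ⟨y, hy.1⟩).2, ?_⟩, by simp⟩
  exact (hp _ _ (hφ _)).2 (by simpa using hy.2)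

theorem map_conj_eq_of_closure_eq [Finite Γ₂] (h : AlmostConjugate Γ₁ Γ₂) {s : Set G} {g : G}
    (hs : Subgroup.closure s = Γ₁) (hg : ∀ x ∈ s, g * x * g⁻¹ ∈ Γ₂) :
    Γ₁.map (MulAut.conj g).toMonoidHom = Γ₂ := by
  refine Subgroup.eq_of_le_of_card_ge ?_ ?_
  · rw [← hs, MonoidHom.map_closure, Subgroup.closure_le]
    rintro _ ⟨x, hx, rfl⟩
    exact hg x hx
  · rw [Subgroup.card_map_of_injective (MulAut.conj g).injective, h.natCard_eq]

end AlmostConjugate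

theorem exists_map_conj_eq_symm {G : Type*} [Group G] {Γ₁ Γ₂ : Subgroup G}
    (h : ∃ g, Γ₁.map (MulAut.conj g).toMonoidHom = Γ₂) :
    ∃ g, Γ₂.map (MulAut.conj g).toMonoidHom = Γ₁ := by
  obtain ⟨g, rfl⟩ := h
  refine ⟨g⁻¹, ?_⟩
  rw [Subgroup.map_map]
  convert Subgroup.map_id Γ₁
  ext x
  simp [mul_assoc]

namespace UnitQuaternion

open Quaternion
open scoped commutatorElement

section Coordinates

/-- The real part of a unit quaternion, that is, half the trace of the corresponding matrix in
`SU(2)` and the cosine of the angular distance to `1`. -/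
def rePart (x : unitary ℍ[ℝ]) : ℝ := (x : ℍ[ℝ]).re

/-- The Euclidean inner product of the imaginary parts, so that the real part of `x * y` is
`rePart x * rePart y - imInner x y`. -/
def imInner (x y : unitary ℍ[ℝ]) : ℝ :=
  (x : ℍ[ℝ]).imI * (y : ℍ[ℝ]).imI + (x : ℍ[ℝ]).imJ * (y : ℍ[ℝ]).imJ +
    (x : ℍ[ℝ]).imK * (y : ℍ[ℝ]).imK

/-- The scalar triple product of the imaginary parts. -/
def imTriple (x y z : unitary ℍ[ℝ]) : ℝ :=
  (x : ℍ[ℝ]).imI * ((y : ℍ[ℝ]).imJ * (z : ℍ[ℝ]).imK - (y : ℍ[ℝ]).imK * (z : ℍ[ℝ]).imJ) +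
    (x : ℍ[ℝ]).imJ * ((y : ℍ[ℝ]).imK * (z : ℍ[ℝ]).imI - (y : ℍ[ℝ]).imI * (z : ℍ[ℝ]).imK) +
    (x : ℍ[ℝ]).imK * ((y : ℍ[ℝ]).imI * (z : ℍ[ℝ]).imJ - (y : ℍ[ℝ]).imJ * (z : ℍ[ℝ]).imI)

variable (x y z : unitary ℍ[ℝ])

theorem coe_inv_eq_star : ((x⁻¹ : unitary ℍ[ℝ]) : ℍ[ℝ]) = star (x : ℍ[ℝ]) := by
  rw [← Unitary.star_eq_inv, Unitary.coe_star]

@[simp] theorem rePart_one : rePart 1 = 1 := by simp [rePart]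

@[simp] theorem rePart_neg : rePart (-x) = -rePart x := by simp [rePart, Unitary.coe_neg]

@[simp] theorem rePart_inv : rePart x⁻¹ = rePart x := by simp [rePart, coe_inv_eq_star]

theorem imInner_comm : imInner x y = imInner y x := by
  simp only [imInner]
  ring

@[simp] theorem imInner_inv_right : imInner x y⁻¹ = -imInner x y := by
  simp only [imInner, coe_inv_eq_star, imI_star, imJ_star, imK_star]
  ring

@[simp] theorem imInner_inv_left : imInner x⁻¹ y = -imInner x y := by
  rw [imInner_comm, imInner_inv_right, imInner_comm]

theorem rePart_mul : rePart (x * y) = rePart x * rePart y - imInner x y := by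
  simp only [rePart, imInner, Submonoid.coe_mul, re_mul]
  ring

theorem rePart_mul_inv : rePart (x * y⁻¹) = rePart x * rePart y + imInner x y := by
  simp [rePart_mul]

theorem rePart_mul_comm : rePart (x * y) = rePart (y * x) := by
  rw [rePart_mul, rePart_mul, imInner_comm, mul_comm]

@[simp] theorem rePart_conj : rePart (x * y * x⁻¹) = rePart y := by
  rw [rePart_mul_comm, inv_mul_cancel_left]

theorem imInner_self : imInner x x = 1 - rePart x ^ 2 := by
  have h := rePart_mul_inv x x
  rw [mul_inv_cancel, rePart_one] at h
  linarith

theorem imInner_self_nonneg : 0 ≤ imInner x x :=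
  add_nonneg (add_nonneg (mul_self_nonneg _) (mul_self_nonneg _)) (mul_self_nonneg _)

theorem rePart_sq_le_one : rePart x ^ 2 ≤ 1 := by
  linarith [imInner_self x, imInner_self_nonneg x]

theorem rePart_le_one : rePart x ≤ 1 := by nlinarith [rePart_sq_le_one x]

theorem rePart_pow_add_two (n : ℕ) :
    rePart (x ^ (n + 2)) = 2 * rePart x * rePart (x ^ (n + 1)) - rePart (x ^ n) := by
  have h₂ : rePart (x ^ (n + 2)) = _ := rePart_mul (x ^ (n + 1)) x
  have h₀ := rePart_mul_inv (x ^ (n + 1)) x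
  rw [pow_succ, mul_inv_cancel_right, ← pow_succ] at h₀
  linarith

theorem rePart_sq : rePart (x ^ 2) = 2 * rePart x ^ 2 - 1 := by
  rw [rePart_pow_add_two x 0, zero_add, pow_one, pow_zero, rePart_one]
  ring

theorem rePart_pow_three : rePart (x ^ 3) = 4 * rePart x ^ 3 - 3 * rePart x := by
  rw [rePart_pow_add_two x 1, rePart_sq, pow_one]
  ring

theorem rePart_pow_five :
    rePart (x ^ 5) = 16 * rePart x ^ 5 - 20 * rePart x ^ 3 + 5 * rePart x := by
  rw [rePart_pow_add_two x 3, rePart_pow_add_two x 2, rePart_pow_three, rePart_sq]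
  ring

theorem imTriple_self_right : imTriple x y y = 0 := by
  simp only [imTriple]
  ring

@[simp] theorem imTriple_inv_left : imTriple x⁻¹ y z = -imTriple x y z := by
  simp only [imTriple, coe_inv_eq_star, imI_star, imJ_star, imK_star]
  ring

theorem imInner_conj :
    imInner (x * y * x⁻¹) z = (2 * rePart x ^ 2 - 1) * imInner y z +
      2 * imInner x y * imInner x z + 2 * rePart x * imTriple x y z := by
  have h := imInner_self x
  simp only [rePart, imInner, imTriple, Submonoid.coe_mul, re_mul, imI_mul, imJ_mul, imK_mul,
    coe_inv_eq_star, re_star, imI_star, imJ_star, imK_star] at h ⊢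
  linear_combination (-(y : ℍ[ℝ]).imI * (z : ℍ[ℝ]).imI - (y : ℍ[ℝ]).imJ * (z : ℍ[ℝ]).imJ -
    (y : ℍ[ℝ]).imK * (z : ℍ[ℝ]).imK) * h

theorem imInner_gram :
    (imInner x x * imInner y z - imInner x y * imInner x z) ^ 2 +
        imInner x x * imTriple x y z ^ 2 =
      (imInner x x * imInner y y - imInner x y ^ 2) *
        (imInner x x * imInner z z - imInner x z ^ 2) := by
  simp only [imInner, imTriple]
  ring

theorem rePart_commutator :
    rePart ⁅x, y⁆ = 1 - 2 * ((1 - rePart x ^ 2) * (1 - rePart y ^ 2) - imInner x y ^ 2) := by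
  rw [commutatorElement_def, rePart_mul_inv, rePart_conj, imInner_conj, imTriple_self_right,
    imInner_self]
  ring

theorem imInner_sq_le : imInner x y ^ 2 ≤ (1 - rePart x ^ 2) * (1 - rePart y ^ 2) := by
  linarith [rePart_commutator x y, rePart_le_one ⁅x, y⁆]

variable {x y z}

theorem rePart_eq_one_iff : rePart x = 1 ↔ x = 1 := by
  refine ⟨fun h => Subtype.ext ?_, fun h => h ▸ rePart_one⟩
  have hx : imInner x x = 0 := by rw [imInner_self, h]; norm_num
  simp only [imInner] at hx
  have hI : (x : ℍ[ℝ]).imI = 0 := by nlinarith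
  have hJ : (x : ℍ[ℝ]).imJ = 0 := by nlinarith
  have hK : (x : ℍ[ℝ]).imK = 0 := by nlinarith
  ext <;> simp_all [rePart]

theorem rePart_lt_one (hx : x ≠ 1) : rePart x < 1 :=
  lt_of_le_of_ne (rePart_le_one x) (rePart_eq_one_iff.not.2 hx)

theorem rePart_eq_neg_one_iff : rePart x = -1 ↔ x = -1 := by
  rw [← neg_eq_iff_eq_neg, ← rePart_neg, rePart_eq_one_iff, neg_eq_iff_eq_neg]

theorem pow_two_eq_one_iff : x ^ 2 = 1 ↔ x = 1 ∨ x = -1 := by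
  rw [← rePart_eq_one_iff, ← rePart_eq_neg_one_iff, ← rePart_eq_one_iff, rePart_sq,
    ← sq_eq_one_iff]
  constructor <;> intro h <;> linarith

theorem commute_iff_imInner_sq_eq :
    Commute x y ↔ imInner x y ^ 2 = (1 - rePart x ^ 2) * (1 - rePart y ^ 2) := by
  rw [← commutatorElement_eq_one_iff_commute, ← rePart_eq_one_iff, rePart_commutator]
  constructor <;> intro h <;> linarith

theorem imInner_sq_lt_of_not_commute (h : ¬Commute x y) :
    imInner x y ^ 2 < (1 - rePart x ^ 2) * (1 - rePart y ^ 2) :=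
  lt_of_le_of_ne (imInner_sq_le x y) (commute_iff_imInner_sq_eq.not.1 h)

theorem imInner_conj_of_commute (h : Commute x z) : imInner x (z * y * z⁻¹) = imInner x y := by
  have hconj : x * (z * y * z⁻¹) = z * (x * y) * z⁻¹ := by
    rw [← mul_assoc, ← mul_assoc, h.eq, mul_assoc z]
  have hre := rePart_conj z (x * y)
  rw [← hconj, rePart_mul, rePart_conj, rePart_mul] at hre
  linarith

theorem eq_or_eq_inv_of_commute (h : Commute x y) (hre : rePart x = rePart y) :
    x = y ∨ x = y⁻¹ := by
  have hI := commute_iff_imInner_sq_eq.1 h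
  rw [hre, ← sq, sq_eq_sq_iff_eq_or_eq_neg] at hI
  refine hI.imp (fun hI => ?_) fun hI => ?_
  · rw [← mul_inv_eq_one, ← rePart_eq_one_iff, rePart_mul_inv, hI, hre]
    ring
  · rw [← mul_eq_one_iff_eq_inv, ← rePart_eq_one_iff, rePart_mul, hI, hre]
    ring

theorem conj_eq_inv_iff (h : ¬Commute x y) :
    x * y * x⁻¹ = y⁻¹ ↔ rePart x = 0 ∧ imInner x y = 0 := by
  have hlt := imInner_sq_lt_of_not_commute h
  rw [← mul_eq_one_iff_eq_inv, ← rePart_eq_one_iff, rePart_mul, rePart_conj, imInner_conj,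
    imTriple_self_right, imInner_self]
  refine ⟨fun h' => ?_, fun ⟨hx, hI⟩ => by rw [hx, hI]; ring⟩
  have hsum : rePart x ^ 2 * (1 - rePart y ^ 2) + imInner x y ^ 2 = 0 := by linarith
  have hy : 0 < 1 - rePart y ^ 2 := by
    nlinarith [rePart_sq_le_one x, sq_nonneg (imInner x y)]
  have hI : imInner x y ^ 2 = 0 := by
    nlinarith [sq_nonneg (imInner x y), mul_nonneg (sq_nonneg (rePart x)) hy.le]
  exact ⟨by simpa [hI, hy.ne'] using hsum, by simpa using hI⟩

end Coordinates

section Conjugacy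

variable {R : Type*} [CommRing R] {a b a' b' : ℍ[R]}

theorem mul_sub_mul_mul_eq_star_mul :
    (a * b - b * a) * a = star a * (a * b - b * a) := by
  ext <;> simp only [re_mul, imI_mul, imJ_mul, imK_mul, re_sub, imI_sub, imJ_sub, imK_sub,
    re_star, imI_star, imJ_star, imK_star] <;>
    ring

theorem sub_mul_star_eq_mul_sub (hre : a.re = a'.re) (hn : normSq a = normSq a') :
    (a - a') * star a = a' * (a - a') := by
  rw [normSq_def', normSq_def', hre] at hn
  ext <;> simp only [re_mul, imI_mul, imJ_mul, imK_mul, re_sub, imI_sub, imJ_sub, imK_sub,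
    re_star, imI_star, imJ_star, imK_star] <;>
    grind

theorem sub_mul_star_eq_mul_sub_of_re_mul_eq (hre : b.re = b'.re)
    (hab : (a * b).re = (a * b').re) : (b - b') * star a = a * (b - b') := by
  simp only [re_mul, hre] at hab
  ext <;> simp only [re_mul, imI_mul, imJ_mul, imK_mul, re_sub, imI_sub, imJ_sub, imK_sub,
    re_star, imI_star, imJ_star, imK_star] <;>
    grind

variable {a b a' b' : unitary ℍ[ℝ]}

theorem normSq_coe : normSq (a : ℍ[ℝ]) = 1 := by
  rw [normSq_def, (Unitary.mem_iff.1 a.2).2, re_one]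

theorem exists_conj_eq_of_mul_eq_mul {q : ℍ[ℝ]} (hq : q ≠ 0) :
    ∃ g : unitary ℍ[ℝ], ∀ a a' : unitary ℍ[ℝ], q * a = a' * q → g * a * g⁻¹ = a' := by
  have hpos : 0 < normSq q := lt_of_le_of_ne normSq_nonneg (normSq_ne_zero.2 hq).symm
  have hn : normSq ((Real.sqrt (normSq q))⁻¹ • q) = 1 := by
    rw [normSq_smul, inv_pow, Real.sq_sqrt hpos.le, inv_mul_cancel₀ hpos.ne']
  refine ⟨⟨(Real.sqrt (normSq q))⁻¹ • q, ?_⟩, fun a a' h => ?_⟩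
  · rw [Unitary.mem_iff, star_mul_self, self_mul_star, hn]
    simp
  · rw [mul_inv_eq_iff_eq_mul]
    exact Subtype.ext (by simp [h])

theorem exists_mul_ne_mul (h₁ : a ≠ 1) (h₂ : a ≠ -1) : ∃ y : ℍ[ℝ], (a : ℍ[ℝ]) * y ≠ y * a := by
  by_contra! hcomm
  simp only [Quaternion.ext_iff, imJ_mul, imK_mul] at hcomm
  obtain ⟨-, -, hiJ, hiK⟩ := hcomm ⟨0, 1, 0, 0⟩
  obtain ⟨-, -, -, hjK⟩ := hcomm ⟨0, 0, 1, 0⟩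
  have hI : (a : ℍ[ℝ]).imI = 0 := by linarith
  have hJ : (a : ℍ[ℝ]).imJ = 0 := by linarith
  have hK : (a : ℍ[ℝ]).imK = 0 := by linarith
  have hself : imInner a a = 0 := by simp [imInner, hI, hJ, hK]
  rw [imInner_self] at hself
  rcases sq_eq_one_iff.1 (by linarith : rePart a ^ 2 = 1) with hre | hre
  · exact h₁ (rePart_eq_one_iff.1 hre)
  · exact h₂ (rePart_eq_neg_one_iff.1 hre)

theorem exists_conj_eq_of_rePart_eq (h : rePart a = rePart a') : ∃ g, g * a * g⁻¹ = a' := by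
  by_cases haa' : a = a'
  · exact ⟨1, by simpa using haa'⟩
  have ha₁ : a ≠ 1 := fun ha => haa' (by rw [ha, eq_comm, ← rePart_eq_one_iff, ← h, ha, rePart_one])
  have ha₂ : a ≠ -1 := fun ha =>
    haa' (by rw [ha, eq_comm, ← rePart_eq_neg_one_iff, ← h, ha, rePart_neg, rePart_one])
  obtain ⟨y, hy⟩ := exists_mul_ne_mul ha₁ ha₂
  obtain ⟨g, hg⟩ := exists_conj_eq_of_mul_eq_mul
    (mul_ne_zero (sub_ne_zero.2 (Subtype.coe_ne_coe.2 haa')) (sub_ne_zero.2 hy))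
  refine ⟨g, hg a a' ?_⟩
  rw [mul_assoc, mul_sub_mul_mul_eq_star_mul, ← mul_assoc,
    sub_mul_star_eq_mul_sub h (normSq_coe.trans normSq_coe.symm), mul_assoc]

theorem exists_conj_pair_eq (hcomm : ¬Commute a b) (ha : rePart a = rePart a')
    (hb : rePart b = rePart b') (hab : rePart (a * b) = rePart (a' * b')) :
    ∃ g, g * a * g⁻¹ = a' ∧ g * b * g⁻¹ = b' := by
  obtain ⟨g, rfl⟩ := exists_conj_eq_of_rePart_eq ha
  obtain ⟨c, rfl⟩ : ∃ c, g * c * g⁻¹ = b' := ⟨g⁻¹ * b' * g, by group⟩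
  rw [rePart_conj] at hb
  rw [conj_mul, rePart_conj] at hab
  by_cases hbc : b = c
  · exact ⟨g, rfl, by rw [hbc]⟩
  have hne : (a : ℍ[ℝ]) * b - b * a ≠ 0 := fun h => hcomm (Subtype.ext (sub_eq_zero.1 h))
  obtain ⟨k, hk⟩ := exists_conj_eq_of_mul_eq_mul
    (mul_ne_zero (sub_ne_zero.2 (Subtype.coe_ne_coe.2 hbc)) hne)
  have hka : k * a * k⁻¹ = a := hk a a <| by
    rw [mul_assoc, mul_sub_mul_mul_eq_star_mul, ← mul_assoc,
      sub_mul_star_eq_mul_sub_of_re_mul_eq hb hab, mul_assoc]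
  have hkb : k * b * k⁻¹ = c := hk b c <| by
    have hswap : (a : ℍ[ℝ]) * b - b * a = -((b : ℍ[ℝ]) * a - a * b) := (neg_sub _ _).symm
    rw [hswap, mul_assoc, neg_mul, mul_sub_mul_mul_eq_star_mul, ← mul_neg, ← mul_assoc,
      sub_mul_star_eq_mul_sub hb (normSq_coe.trans normSq_coe.symm), mul_assoc]
  refine ⟨g * k, ?_, ?_⟩
  · simpa only [mul_assoc, mul_inv_rev] using congrArg (g * · * g⁻¹) hka
  · simpa only [mul_assoc, mul_inv_rev] using congrArg (g * · * g⁻¹) hkb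

end Conjugacy

section MaxRePart

/-- `c` is the largest real part of a nontrivial element of `Γ`, so that `Real.arccos c` is the
minimal angular distance between two points of `Γ` on the three-sphere. -/
def IsMaxRePart (Γ : Subgroup (unitary ℍ[ℝ])) (c : ℝ) : Prop :=
  IsGreatest (rePart '' {x | x ∈ Γ ∧ x ≠ 1}) c

variable {Γ H : Subgroup (unitary ℍ[ℝ])} {a b s x y : unitary ℍ[ℝ]} {c : ℝ}

theorem exists_isMaxRePart [Finite Γ] (h : Γ ≠ ⊥) : ∃ c, IsMaxRePart Γ c := by
  obtain ⟨x, hx, hx₁⟩ := Γ.bot_or_exists_ne_one.resolve_left h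
  have hfin : {x | x ∈ Γ ∧ x ≠ 1}.Finite := (Set.toFinite (Γ : Set _)).subset fun _ => And.left
  exact (hfin.image rePart).isCompact.exists_isGreatest ⟨_, x, ⟨hx, hx₁⟩, rfl⟩

theorem IsMaxRePart.rePart_le (h : IsMaxRePart Γ c) (hx : x ∈ Γ) (hx₁ : x ≠ 1) : rePart x ≤ c :=
  h.2 ⟨x, ⟨hx, hx₁⟩, rfl⟩

theorem IsMaxRePart.eq_one_of_lt (h : IsMaxRePart Γ c) (hx : x ∈ Γ) (hlt : c < rePart x) : x = 1 :=
  of_not_not fun hx₁ => (h.rePart_le hx hx₁).not_gt hlt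

theorem IsMaxRePart.exists_mem (h : IsMaxRePart Γ c) : ∃ a ∈ Γ, rePart a = c := by
  obtain ⟨a, ⟨ha, -⟩, rfl⟩ := h.1
  exact ⟨a, ha, rfl⟩

theorem IsMaxRePart.lt_one (h : IsMaxRePart Γ c) : c < 1 := by
  obtain ⟨a, ⟨-, ha⟩, rfl⟩ := h.1
  exact rePart_lt_one ha

theorem IsMaxRePart.one_sub_le_of_not_commute (h : IsMaxRePart Γ c) (hx : x ∈ Γ) (hy : y ∈ Γ)
    (hxy : ¬Commute x y) :
    1 - c ≤ 2 * ((1 - rePart x ^ 2) * (1 - rePart y ^ 2) - imInner x y ^ 2) := by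
  have hmem : ⁅x, y⁆ ∈ Γ :=
    Γ.mul_mem (Γ.mul_mem (Γ.mul_mem hx hy) (Γ.inv_mem hx)) (Γ.inv_mem hy)
  have hle := h.rePart_le hmem (commutatorElement_eq_one_iff_commute.not.2 hxy)
  rw [rePart_commutator] at hle
  linarith

theorem exists_isMaxOn_rePart_sdiff [Finite Γ] (h : ¬Γ ≤ H) :
    ∃ y ∈ (Γ : Set _) \ H, IsMaxOn rePart ((Γ : Set _) \ H) y :=
  Set.exists_max_image _ rePart ((Set.toFinite (Γ : Set _)).subset Set.sdiff_subset)
    (Set.sdiff_nonempty.2 h)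

theorem abs_imInner_le_of_isMaxOn (hHΓ : H ≤ Γ) (hy : y ∈ (Γ : Set _) \ H)
    (hmax : IsMaxOn rePart ((Γ : Set _) \ H) y) (hs : s ∈ H) :
    |imInner s y| ≤ rePart y * (1 - rePart s) := by
  have hmul : ∀ t ∈ H, rePart (y * t) ≤ rePart y := fun t ht =>
    hmax ⟨Γ.mul_mem hy.1 (hHΓ ht), fun h => hy.2 ((Subgroup.mul_mem_cancel_right H ht).1 h)⟩
  have hpos := hmul s hs
  have hneg := hmul s⁻¹ (H.inv_mem hs)
  rw [rePart_mul, imInner_comm] at hpos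
  rw [rePart_mul_inv, imInner_comm] at hneg
  exact abs_le.2 ⟨by linarith, by linarith⟩

theorem rePart_nonneg_of_isMaxOn (hHΓ : H ≤ Γ) (hy : y ∈ (Γ : Set _) \ H)
    (hmax : IsMaxOn rePart ((Γ : Set _) \ H) y) (hs : s ∈ H) (hs₁ : s ≠ 1) : 0 ≤ rePart y :=
  nonneg_of_mul_nonneg_left
    ((abs_nonneg _).trans (abs_imInner_le_of_isMaxOn hHΓ hy hmax hs))
    (sub_pos.2 (rePart_lt_one hs₁))

theorem imInner_sq_le_of_isMaxOn (hHΓ : H ≤ Γ) (hy : y ∈ (Γ : Set _) \ H)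
    (hmax : IsMaxOn rePart ((Γ : Set _) \ H) y) (hs : s ∈ H) (hs₁ : s ≠ 1)
    (hys : rePart y ≤ rePart s) :
    (1 + rePart s) ^ 2 * imInner s y ^ 2 ≤
      rePart s ^ 2 * ((1 - rePart s ^ 2) * (1 - rePart y ^ 2)) := by
  have hy₀ := rePart_nonneg_of_isMaxOn hHΓ hy hmax hs hs₁
  have hI := sq_le_sq.2 ((abs_imInner_le_of_isMaxOn hHΓ hy hmax hs).trans (le_abs_self _))
  have hle : rePart y ^ 2 ≤ rePart s ^ 2 := pow_le_pow_left₀ hy₀ hys 2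
  calc (1 + rePart s) ^ 2 * imInner s y ^ 2
      ≤ (1 + rePart s) ^ 2 * (rePart y * (1 - rePart s)) ^ 2 := by gcongr
    _ = (1 - rePart s ^ 2) * (rePart y ^ 2 * (1 - rePart s ^ 2)) := by ring
    _ ≤ (1 - rePart s ^ 2) * (rePart s ^ 2 * (1 - rePart y ^ 2)) := by
        gcongr ?_ * ?_
        · linarith [rePart_sq_le_one s]
        · linarith
    _ = _ := by ring

theorem IsMaxRePart.mem_zpowers_of_commute [Finite Γ] (h : IsMaxRePart Γ c) (ha : a ∈ Γ)
    (hac : rePart a = c) (hx : x ∈ Γ) (hax : Commute a x) : x ∈ Subgroup.zpowers a := by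
  by_contra hxa
  have ha₁ : a ≠ 1 := by rintro rfl; exact h.lt_one.ne' (by rw [← hac, rePart_one])
  let C := Γ ⊓ Subgroup.centralizer {a}
  have : Finite C := Finite.Set.subset (Γ : Set _) Set.inter_subset_left
  have hle : Subgroup.zpowers a ≤ C :=
    le_inf (Subgroup.zpowers_le.2 ha)
      (Subgroup.zpowers_le.2 (Subgroup.mem_centralizer_singleton_iff.2 rfl))
  have hxC : x ∈ C := ⟨hx, Subgroup.mem_centralizer_singleton_iff.2 hax.eq.symm⟩
  obtain ⟨y, hy, hmax⟩ := exists_isMaxOn_rePart_sdiff fun hC => hxa (hC hxC)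
  have hyc : rePart y ≤ c := h.rePart_le hy.1.1 fun hy₁ => hy.2 (hy₁ ▸ Subgroup.one_mem _)
  have hy₀ := rePart_nonneg_of_isMaxOn hle hy hmax (Subgroup.mem_zpowers a) ha₁
  have hI := imInner_sq_le_of_isMaxOn hle hy hmax (Subgroup.mem_zpowers a) ha₁ (hac ▸ hyc)
  have hya : Commute y a := Subgroup.mem_centralizer_singleton_iff.1 hy.1.2
  rw [commute_iff_imInner_sq_eq.1 hya.symm, hac] at hI
  have hc := h.lt_one
  have hpos : 0 < (1 - c ^ 2) * (1 - rePart y ^ 2) := mul_pos (by nlinarith) (by nlinarith)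
  nlinarith

/- If neither conjugation by `a` nor by `a⁻¹` brings the axis of `w` closer to that of `b`, then the
dihedral angle at the axis of `a` between those of `w` and `b` is at most the angle of `a`, whose
cosine is `rePart a`. -/
theorem mul_le_sq_of_imInner_conj_le {w : unitary ℍ[ℝ]}
    (hsign : 0 ≤ imInner a w * imInner a b)
    (hle : imInner (a * w * a⁻¹) b ≤ imInner w b)
    (hle' : imInner (a⁻¹ * w * a) b ≤ imInner w b) :
    rePart a ^ 2 * (((1 - rePart a ^ 2) * (1 - rePart w ^ 2) - imInner a w ^ 2) *
        ((1 - rePart a ^ 2) * (1 - rePart b ^ 2) - imInner a b ^ 2)) ≤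
      ((1 - rePart a ^ 2) * imInner w b) ^ 2 := by
  have hgram := imInner_gram a w b
  have hconj := imInner_conj a⁻¹ w b
  rw [inv_inv] at hconj
  simp only [hconj, imInner_conj, imInner_self, rePart_inv, imInner_inv_left, imTriple_inv_left]
    at hle hle' hgram
  set K := (1 - rePart a ^ 2) * imInner w b - imInner a w * imInner a b
  have hE : rePart a * imTriple a w b ≤ K := by linarith
  have hE' : -K ≤ rePart a * imTriple a w b := by linarith
  have hA : 0 ≤ 1 - rePart a ^ 2 := by linarith [rePart_sq_le_one a]
  calc _ = rePart a ^ 2 * K ^ 2 + (1 - rePart a ^ 2) * (rePart a * imTriple a w b) ^ 2 := by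
        rw [← hgram]
        ring
    _ ≤ rePart a ^ 2 * K ^ 2 + (1 - rePart a ^ 2) * K ^ 2 := by
        have hEK := sq_le_sq' hE' hE
        gcongr
    _ = K ^ 2 := by ring
    _ ≤ _ := pow_le_pow_left₀ (by linarith) (by linarith) 2

theorem exists_mem_zpowers_mul_le_imInner_conj_sq (ha : IsOfFinOrder a) (y b : unitary ℍ[ℝ]) :
    ∃ z ∈ Subgroup.zpowers a,
      rePart a ^ 2 * (((1 - rePart a ^ 2) * (1 - rePart y ^ 2) - imInner a y ^ 2) *
          ((1 - rePart a ^ 2) * (1 - rePart b ^ 2) - imInner a b ^ 2)) ≤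
        ((1 - rePart a ^ 2) * imInner (z * y * z⁻¹) b) ^ 2 := by
  wlog hsign : 0 ≤ imInner a y * imInner a b generalizing b
  · simpa using this b⁻¹ (by simp; linarith)
  obtain ⟨z, hz, hmax⟩ := Set.exists_max_image (Subgroup.zpowers a : Set _)
    (fun z => imInner (z * y * z⁻¹) b) ha.finite_zpowers ⟨1, Subgroup.one_mem _⟩
  refine ⟨z, hz, ?_⟩
  have hle : ∀ w ∈ Subgroup.zpowers a,
      imInner (w * (z * y * z⁻¹) * w⁻¹) b ≤ imInner (z * y * z⁻¹) b := fun w hw => by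
    simpa only [mul_assoc, mul_inv_rev] using hmax (w * z) (Subgroup.mul_mem _ hw hz)
  have haz : Commute a z := by
    obtain ⟨k, rfl⟩ := hz
    exact (Commute.refl a).zpow_right k
  have hw := mul_le_sq_of_imInner_conj_le (by rwa [imInner_conj_of_commute haz])
    (hle a (Subgroup.mem_zpowers a))
    (by simpa only [inv_inv] using hle a⁻¹ (Subgroup.inv_mem _ (Subgroup.mem_zpowers a)))
  rwa [imInner_conj_of_commute haz, rePart_conj] at hw

theorem pow_three_le_chord {R : Type*} [CommRing R] [LinearOrder R] [IsStrictOrderedRing R]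
    {p q t : R} (hp : 0 ≤ p) (hpt : p ≤ t) (htq : t ≤ q) :
    t ^ 3 ≤ (p ^ 2 + p * q + q ^ 2) * t - p * q * (p + q) := by
  have h : 0 ≤ (t - p) * (q - t) * (t + p + q) :=
    mul_nonneg (mul_nonneg (by linarith) (by linarith)) (by linarith)
  linarith

/- The numerical core of `IsExtremalPair.closure_eq`: `p / P`, `q / Q` and `r / P` are the squared
cosines between the imaginary parts of `a` and `y`, of `a` and `b`, and of a rotated `y` and `b`. -/
theorem nonpos_of_mul_sub_mul_sub_le {c P Q p q r : ℝ} (hP : 0 < P) (hQ : 0 < Q)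
    (hp : (1 + c) ^ 2 * p ≤ c ^ 2 * P) (hq : (1 + c) ^ 2 * q ≤ c ^ 2 * Q)
    (hr : (1 + c) ^ 2 * r ≤ c ^ 2 * P) (h : c ^ 2 * ((P - p) * (Q - q)) ≤ Q * r) : c ≤ 0 := by
  by_contra! hc
  have hPp : (1 + 2 * c) * P ≤ (1 + c) ^ 2 * (P - p) := by linarith
  have hQq : (1 + 2 * c) * Q ≤ (1 + c) ^ 2 * (Q - q) := by linarith
  have hchain : (1 + 2 * c) ^ 2 * (c ^ 2 * P * Q) ≤ (1 + c) ^ 2 * (c ^ 2 * P * Q) := calc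
    _ = c ^ 2 * (((1 + 2 * c) * P) * ((1 + 2 * c) * Q)) := by ring
    _ ≤ c ^ 2 * (((1 + c) ^ 2 * (P - p)) * ((1 + c) ^ 2 * (Q - q))) := by
        have := mul_le_mul hPp hQq (by positivity) ((by positivity : (0 : ℝ) ≤ _).trans hPp)
        gcongr
    _ = (1 + c) ^ 4 * (c ^ 2 * ((P - p) * (Q - q))) := by ring
    _ ≤ (1 + c) ^ 4 * (Q * r) := by gcongr
    _ = (1 + c) ^ 2 * Q * ((1 + c) ^ 2 * r) := by ring
    _ ≤ (1 + c) ^ 2 * Q * (c ^ 2 * P) := by gcongr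
    _ = _ := by ring
  have hle := le_of_mul_le_mul_right hchain (by positivity)
  nlinarith

end MaxRePart

/-- `a` and `b` are noncommuting elements of `Γ` whose common real part `c` is positive and largest
possible: rotations through the smallest angle about two different axes. -/
structure IsExtremalPair (Γ : Subgroup (unitary ℍ[ℝ])) (c : ℝ) (a b : unitary ℍ[ℝ]) : Prop where
  isMaxRePart : IsMaxRePart Γ c
  pos : 0 < c
  left_mem : a ∈ Γ
  rePart_left : rePart a = c
  right_mem : b ∈ Γ
  rePart_right : rePart b = c
  not_commute : ¬Commute a b

namespace IsExtremalPair

variable {Γ : Subgroup (unitary ℍ[ℝ])} {a b x : unitary ℍ[ℝ]} {c : ℝ}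

theorem inv_right (h : IsExtremalPair Γ c a b) : IsExtremalPair Γ c a b⁻¹ :=
  { h with
    right_mem := Γ.inv_mem h.right_mem
    rePart_right := by rw [rePart_inv, h.rePart_right]
    not_commute := Commute.inv_right_iff.not.2 h.not_commute }

theorem rePart_mul_le (h : IsExtremalPair Γ c a b) : rePart (a * b) ≤ c :=
  h.isMaxRePart.rePart_le (Γ.mul_mem h.left_mem h.right_mem) fun h₁ =>
    h.not_commute (by rw [mul_eq_one_iff_eq_inv.1 h₁]; exact .inv_left rfl)

theorem imInner_sq_le (h : IsExtremalPair Γ c a b) :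
    (1 + c) ^ 2 * imInner a b ^ 2 ≤ c ^ 2 * (1 - c ^ 2) ^ 2 := by
  have hpos := h.rePart_mul_le
  have hneg := h.inv_right.rePart_mul_le
  rw [rePart_mul, h.rePart_left, h.rePart_right] at hpos
  rw [rePart_mul_inv, h.rePart_left, h.rePart_right] at hneg
  have hI := sq_le_sq' (by linarith : -(c * (1 - c)) ≤ imInner a b) (by linarith)
  calc (1 + c) ^ 2 * imInner a b ^ 2 ≤ (1 + c) ^ 2 * (c * (1 - c)) ^ 2 := by gcongr
    _ = _ := by ring

theorem closure_eq [Finite Γ] (h : IsExtremalPair Γ c a b) : Subgroup.closure {a, b} = Γ := by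
  have ⟨hΓ, hc, ha, hac, hb, hbc, hab⟩ := h
  set H := Subgroup.closure {a, b}
  have hHΓ : H ≤ Γ := (Subgroup.closure_le Γ).2 (Set.pair_subset ha hb)
  have haH : a ∈ H := Subgroup.subset_closure (Set.mem_insert a _)
  have hbH : b ∈ H := Subgroup.subset_closure (Set.mem_insert_of_mem a rfl)
  by_contra hne
  obtain ⟨y, hy, hmax⟩ := exists_isMaxOn_rePart_sdiff fun hle => hne (le_antisymm hHΓ hle)
  have ha₁ : a ≠ 1 := by rintro rfl; exact hab (Commute.one_left b)
  have hb₁ : b ≠ 1 := by rintro rfl; exact hab (Commute.one_right a)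
  have hyc : rePart y ≤ c := hΓ.rePart_le hy.1 fun hy₁ => hy.2 (hy₁ ▸ H.one_mem)
  have hy₀ := rePart_nonneg_of_isMaxOn hHΓ hy hmax haH ha₁
  obtain ⟨z, hz, hrot⟩ := exists_mem_zpowers_mul_le_imInner_conj_sq
    (Submonoid.isOfFinOrder_coe.2 (isOfFinOrder_of_finite (⟨a, ha⟩ : Γ))) y b
  have hzH : z ∈ H := Subgroup.zpowers_le.2 haH hz
  have hw : z * y * z⁻¹ ∈ (Γ : Set _) \ H :=
    ⟨Γ.mul_mem (Γ.mul_mem (hHΓ hzH) hy.1) (Γ.inv_mem (hHΓ hzH)), fun hw => hy.2 <|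
      (H.mul_mem_cancel_left hzH).1 ((H.mul_mem_cancel_right (H.inv_mem hzH)).1 hw)⟩
  have hyI := imInner_sq_le_of_isMaxOn hHΓ hy hmax haH ha₁ (hac ▸ hyc)
  have hwI := imInner_sq_le_of_isMaxOn hHΓ hw (fun x hx => (hmax hx).trans (rePart_conj z y).ge)
    hbH hb₁ (by rwa [rePart_conj, hbc])
  rw [hac] at hyI
  rw [imInner_comm, rePart_conj, hbc] at hwI
  rw [hac, hbc, mul_pow, ← sq (1 - c ^ 2)] at hrot
  have hA : 0 < 1 - c ^ 2 := by nlinarith [hΓ.lt_one]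
  have hX : 0 < 1 - rePart y ^ 2 := by nlinarith
  exact hc.not_ge (nonpos_of_mul_sub_mul_sub_le (mul_pos hA hX) (pow_pos hA 2) hyI
    h.imInner_sq_le hwI hrot)

theorem neg_one_mem [Finite Γ] (h : IsExtremalPair Γ c a b) : -1 ∈ Γ := by
  have hpos : 0 < orderOf a :=
    (Submonoid.isOfFinOrder_coe.2 (isOfFinOrder_of_finite (⟨a, h.left_mem⟩ : Γ))).orderOf_pos
  obtain ⟨k, hk⟩ | ⟨k, hk⟩ := (orderOf a).even_or_odd
  · have hsq : (a ^ k) ^ 2 = 1 := by rw [← pow_mul, mul_two, ← hk, pow_orderOf_eq_one]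
    have hne : a ^ k ≠ 1 := pow_ne_one_of_lt_orderOf (by lia) (by lia)
    exact (pow_two_eq_one_iff.1 hsq).resolve_left hne ▸ Γ.pow_mem h.left_mem k
  · have hsq : (a ^ (k + 1)) ^ 2 = a := by
      rw [← pow_mul, show (k + 1) * 2 = orderOf a + 1 by lia, pow_succ, pow_orderOf_eq_one, one_mul]
    -- A square root of `a` is so close to `1` or `-1` that its commutator with `b` would have real
    -- part greater than `c`.
    have hroot : ¬Commute (a ^ (k + 1)) b := fun hcomm => h.not_commute (hsq ▸ hcomm.pow_left 2)
    have hcomm := h.isMaxRePart.one_sub_le_of_not_commute (Γ.pow_mem h.left_mem _) h.right_mem hroot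
    have hre := rePart_sq (a ^ (k + 1))
    rw [hsq, h.rePart_left] at hre
    rw [h.rePart_right] at hcomm
    have hc₁ : 0 < (1 - c) * c ^ 2 :=
      mul_pos (sub_pos.2 h.isMaxRePart.lt_one) (pow_pos h.pos 2)
    nlinarith [sq_nonneg (imInner (a ^ (k + 1)) b)]

theorem eq_neg_one_of_rePart_lt_neg [Finite Γ] (h : IsExtremalPair Γ c a b) (hx : x ∈ Γ)
    (hxc : rePart x < -c) : x = -1 := by
  rw [← neg_eq_iff_eq_neg]
  exact h.isMaxRePart.eq_one_of_lt (neg_one_mul x ▸ Γ.mul_mem h.neg_one_mem hx)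
    (by rw [rePart_neg]; linarith)

theorem eq_half_of_rePart_pow_three_lt [Finite Γ] (h : IsExtremalPair Γ c a b) (hx : x ∈ Γ)
    (hx₀ : 0 < rePart x) (hxc : rePart (x ^ 3) < -c) : rePart x = 1 / 2 := by
  have hx₃ := h.eq_neg_one_of_rePart_lt_neg (Γ.pow_mem hx 3) hxc
  rw [← rePart_eq_neg_one_iff, rePart_pow_three] at hx₃
  have hfactor : (rePart x + 1) * (2 * rePart x - 1) ^ 2 = 0 := by linarith
  have := (pow_eq_zero_iff two_ne_zero).1 ((mul_eq_zero.1 hfactor).resolve_left (by linarith))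
  linarith

theorem golden_of_rePart_pow_five_lt [Finite Γ] (h : IsExtremalPair Γ c a b) (hx : x ∈ Γ)
    (hx₀ : 0 < rePart x) (hxc : rePart (x ^ 5) < -c) :
    4 * rePart x ^ 2 = 2 * rePart x + 1 := by
  have hx₅ := h.eq_neg_one_of_rePart_lt_neg (Γ.pow_mem hx 5) hxc
  rw [← rePart_eq_neg_one_iff, rePart_pow_five] at hx₅
  have hfactor : (rePart x + 1) * (4 * rePart x ^ 2 - 2 * rePart x - 1) ^ 2 = 0 := by linarith
  have := (pow_eq_zero_iff two_ne_zero).1 ((mul_eq_zero.1 hfactor).resolve_left (by linarith))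
  linarith

theorem sq_lt (h : IsExtremalPair Γ c a b) : c ^ 2 < 3 / 4 := by
  have hc := h.pos
  have hc₁ := h.isMaxRePart.lt_one
  have hcomm := h.isMaxRePart.one_sub_le_of_not_commute h.left_mem h.right_mem h.not_commute
  rw [h.rePart_left, h.rePart_right] at hcomm
  have hle : 1 ≤ 2 * (1 - c ^ 2) * (1 + c) :=
    le_of_mul_le_mul_left (by linarith [sq_nonneg (imInner a b)]) (sub_pos.2 hc₁)
  nlinarith

theorem eq_half_or_sq_eq_or_golden [Finite Γ] (h : IsExtremalPair Γ c a b) :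
    c = 1 / 2 ∨ c ^ 2 = 1 / 2 ∨ 4 * c ^ 2 = 2 * c + 1 := by
  have hc := h.pos
  have hac := h.rePart_left
  rcases lt_trichotomy (c ^ 2) (1 / 2) with hlt | heq | hgt
  · refine .inl (hac ▸ h.eq_half_of_rePart_pow_three_lt h.left_mem (hac ▸ hc) ?_)
    rw [rePart_pow_three, hac]
    nlinarith
  · exact .inr (.inl heq)
  · refine .inr (.inr (hac ▸ h.golden_of_rePart_pow_five_lt h.left_mem (hac ▸ hc) ?_))
    rw [rePart_pow_five, hac]
    have : 0 < c * ((2 * c ^ 2 - 1) * (3 - 4 * c ^ 2)) :=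
      mul_pos hc (mul_pos (by linarith) (by linarith [h.sq_lt]))
    linarith

theorem rePart_mul_eq_half_or [Finite Γ] (h : IsExtremalPair Γ c a b) :
    rePart (a * b) = 1 / 2 ∨ rePart (a * b⁻¹) = 1 / 2 := by
  wlog hle : rePart (a * b) ≤ rePart (a * b⁻¹) generalizing b
  · simpa using (this h.inv_right (by simpa using le_of_not_ge hle)).symm
  have hsum : rePart (a * b) + rePart (a * b⁻¹) = 2 * c ^ 2 := by
    rw [rePart_mul, rePart_mul_inv, h.rePart_left, h.rePart_right]
    ring
  have hc := h.pos
  have hmul' := h.inv_right.rePart_mul_le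
  have hmem := Γ.mul_mem h.left_mem h.right_mem
  have hmem' := Γ.mul_mem h.left_mem h.inv_right.right_mem
  rcases h.eq_half_or_sq_eq_or_golden with hc₁ | hc₂ | hc₃
  · have hc₂ : c ^ 2 = 1 / 4 := by rw [hc₁]; norm_num
    have hchord := pow_three_le_chord (p := 1 / 4) (q := 1 / 2) (t := rePart (a * b⁻¹))
      (by norm_num) (by linarith) (by linarith)
    exact .inr (h.eq_half_of_rePart_pow_three_lt hmem' (by linarith)
      (by rw [rePart_pow_three]; linarith))
  -- `71 / 100` and `81 / 100` bound `√2 / 2` and `cos (π / 5)` from above.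
  · have hclt : c < 71 / 100 := by nlinarith
    have hchord := pow_three_le_chord (p := 29 / 100) (q := 1 / 2) (t := rePart (a * b))
      (by norm_num) (by linarith) (by linarith)
    exact .inl (h.eq_half_of_rePart_pow_three_lt hmem (by linarith)
      (by rw [rePart_pow_three]; linarith))
  · have hclt : c < 81 / 100 := by nlinarith
    have hchord := pow_three_le_chord (p := 1 / 2) (q := 131 / 200) (t := rePart (a * b))
      (by norm_num) (by linarith) (by linarith)
    exact .inl (h.eq_half_of_rePart_pow_three_lt hmem (by linarith)
      (by rw [rePart_pow_three]; linarith))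

end IsExtremalPair

section Generators

variable {Γ : Subgroup (unitary ℍ[ℝ])} {a x : unitary ℍ[ℝ]} {c : ℝ}

theorem IsMaxRePart.closure_eq_or_exists_closure_pair_eq [Finite Γ] (h : IsMaxRePart Γ c)
    (ha : a ∈ Γ) (hac : rePart a = c)
    (hinv : ∀ x ∈ Γ, ¬Commute a x → x * a * x⁻¹ = a⁻¹) :
    Subgroup.closure {a} = Γ ∨ ∃ b ∈ Γ, ¬Commute a b ∧ rePart b = 0 ∧ rePart (a * b) = 0 ∧
      Subgroup.closure {a, b} = Γ := by
  by_cases! hcomm : ∀ x ∈ Γ, Commute a x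
  · rw [← Subgroup.zpowers_eq_closure]
    exact .inl (le_antisymm (Subgroup.zpowers_le.2 ha) fun x hx =>
      h.mem_zpowers_of_commute ha hac hx (hcomm x hx))
  obtain ⟨b, hb, hab⟩ := hcomm
  have hba := hinv b hb hab
  obtain ⟨hb₀, hI⟩ := (conj_eq_inv_iff fun h => hab h.symm).1 hba
  refine .inr ⟨b, hb, hab, hb₀, by rw [rePart_mul, imInner_comm, hb₀, hI]; ring,
    le_antisymm ((Subgroup.closure_le Γ).2 (Set.pair_subset ha hb)) fun x hx => ?_⟩
  set H := Subgroup.closure {a, b}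
  have haH : Subgroup.zpowers a ≤ H :=
    Subgroup.zpowers_le.2 (Subgroup.subset_closure (Set.mem_insert a _))
  have hbH : b ∈ H := Subgroup.subset_closure (Set.mem_insert_of_mem a rfl)
  by_cases hax : Commute a x
  · exact haH (h.mem_zpowers_of_commute ha hac hx hax)
  · have hxb : Commute (x * b) a := by
      rw [commute_iff_eq, ← mul_inv_eq_iff_eq_mul, mul_inv_rev]
      calc x * b * a * (b⁻¹ * x⁻¹) = x * (b * a * b⁻¹) * x⁻¹ := by group
        _ = (x * a * x⁻¹)⁻¹ := by rw [hba, conj_inv]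
        _ = a := by rw [hinv x hx hax, inv_inv]
    exact (H.mul_mem_cancel_right hbH).1
      (haH (h.mem_zpowers_of_commute ha hac (Γ.mul_mem hx hb) hxb.symm))

theorem conj_eq_inv_of_forall_commute (ha : a ∈ Γ)
    (hcomm : ∀ s ∈ Γ, rePart s = rePart a → Commute a s) (hx : x ∈ Γ) (hax : ¬Commute a x) :
    x * a * x⁻¹ = a⁻¹ := by
  have hmem : x * a * x⁻¹ ∈ Γ := Γ.mul_mem (Γ.mul_mem hx ha) (Γ.inv_mem hx)
  rcases eq_or_eq_inv_of_commute (hcomm _ hmem (rePart_conj x a)) (rePart_conj x a).symm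
    with h | h
  · exact absurd (mul_inv_eq_iff_eq_mul.1 h.symm).symm hax
  · exact (inv_eq_iff_eq_inv.2 h).symm

theorem IsMaxRePart.conj_eq_inv_of_nonpos (h : IsMaxRePart Γ c) (hc : c ≤ 0) (ha : a ∈ Γ)
    (hac : rePart a = c) (hx : x ∈ Γ) (hax : ¬Commute a x) : x * a * x⁻¹ = a⁻¹ := by
  have hle : ∀ k : ℤ, rePart (x * a ^ k) ≤ c := fun k =>
    h.rePart_le (Γ.mul_mem hx (Γ.zpow_mem ha k)) fun hxk => hax <|
      eq_inv_of_mul_eq_one_left hxk ▸ ((Commute.refl a).zpow_right k).inv_right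
  have hx₀ : rePart x ≤ c := by simpa using hle 0
  have hx₁ : rePart x * c - imInner x a ≤ c := by simpa [rePart_mul, hac] using hle 1
  have hx₂ : rePart x * c + imInner x a ≤ c := by simpa [rePart_mul_inv, hac] using hle (-1)
  obtain rfl : c = 0 := by nlinarith
  have hsq : a ^ 2 = -1 := by rw [← rePart_eq_neg_one_iff, rePart_sq, hac]; norm_num
  have hx₃ : -rePart x ≤ 0 := by simpa [hsq] using hle 2
  exact (conj_eq_inv_iff fun h => hax h.symm).2 ⟨by linarith, by linarith⟩

theorem two_lt_ncard_rePart_eq_iff [Finite Γ] (ha : a ∈ Γ) :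
    2 < {x | x ∈ Γ ∧ rePart x = rePart a}.ncard ↔
      ∃ s ∈ Γ, rePart s = rePart a ∧ ¬Commute a s := by
  constructor
  · contrapose!
    intro hcomm
    have hsub : {x | x ∈ Γ ∧ rePart x = rePart a} ⊆ {a, a⁻¹} := fun x hx =>
      (eq_or_eq_inv_of_commute (hcomm x hx.1 hx.2) hx.2.symm).imp Eq.symm
        fun h => (inv_eq_iff_eq_inv.2 h).symm
    exact (Set.ncard_le_ncard hsub).trans
      ((Set.ncard_insert_le _ _).trans (by rw [Set.ncard_singleton]))
  · rintro ⟨s, hs, hsa, has⟩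
    have hinv : a ≠ a⁻¹ := fun h => by
      rcases pow_two_eq_one_iff.1 (by rw [sq, mul_eq_one_iff_eq_inv, ← h]) with rfl | rfl
      · exact has (.one_left s)
      · exact has (.neg_one_left s)
    have hfin : {x | x ∈ Γ ∧ rePart x = rePart a}.Finite :=
      (Set.toFinite (Γ : Set _)).subset fun _ => And.left
    exact (Set.two_lt_ncard_iff hfin).2
      ⟨a, a⁻¹, s, ⟨ha, rfl⟩, ⟨Γ.inv_mem ha, rePart_inv a⟩, ⟨hs, hsa⟩, hinv,
        fun h => has (h ▸ .refl a), fun h => has (h ▸ .inv_right (.refl a))⟩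

/-- For noncyclic `Γ`, the real parts of `b` and `a * b` for a suitable `b` generating `Γ` together
with any `a` of maximal real part `c`. The values `(c, 1 / 2)` occur for the binary polyhedral
groups, `(0, 0)` for the binary dihedral groups; `(0, 0)` is a junk value if `Γ` is cyclic. -/
noncomputable def generatorTraces (Γ : Subgroup (unitary ℍ[ℝ])) (c : ℝ) : ℝ × ℝ :=
  open Classical in
  if 0 < c ∧ 2 < {x | x ∈ Γ ∧ rePart x = c}.ncard then (c, 1 / 2) else (0, 0)

theorem IsMaxRePart.closure_eq_or_exists_generatorTraces_eq [Finite Γ] (h : IsMaxRePart Γ c)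
    (ha : a ∈ Γ) (hac : rePart a = c) :
    Subgroup.closure {a} = Γ ∨ ∃ b ∈ Γ, ¬Commute a b ∧
      (rePart b, rePart (a * b)) = generatorTraces Γ c ∧ Subgroup.closure {a, b} = Γ := by
  rw [generatorTraces]
  split_ifs with hlevel
  · obtain ⟨s, hs, hsc, has⟩ := (two_lt_ncard_rePart_eq_iff ha).1 (hac ▸ hlevel.2)
    have hpair : IsExtremalPair Γ c a s := ⟨h, hlevel.1, ha, hac, hs, hsc.trans hac, has⟩
    rcases hpair.rePart_mul_eq_half_or with hmul | hmul
    · exact .inr ⟨s, hs, has, by rw [hsc, hac, hmul], hpair.closure_eq⟩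
    · have hpair := hpair.inv_right
      exact .inr ⟨s⁻¹, hpair.right_mem, hpair.not_commute, by rw [hpair.rePart_right, hmul],
        hpair.closure_eq⟩
  · have hinv : ∀ x ∈ Γ, ¬Commute a x → x * a * x⁻¹ = a⁻¹ := fun x hx hax => by
      rcases le_or_gt c 0 with hc | hc
      · exact h.conj_eq_inv_of_nonpos hc ha hac hx hax
      · refine conj_eq_inv_of_forall_commute ha ?_ hx hax
        by_contra! hcomm
        exact hlevel ⟨hc, hac ▸ (two_lt_ncard_rePart_eq_iff ha).2 hcomm⟩
    simpa only [Prod.mk.injEq, and_assoc] using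
      h.closure_eq_or_exists_closure_pair_eq ha hac hinv

end Generators

section AlmostConjugate

variable {Γ₁ Γ₂ : Subgroup (unitary ℍ[ℝ])} {a a' : unitary ℍ[ℝ]} {c : ℝ}

theorem rePart_eq_of_isConj {x y : unitary ℍ[ℝ]} (h : IsConj x y) : rePart x = rePart y := by
  obtain ⟨g, rfl⟩ := isConj_iff.1 h
  exact (rePart_conj g x).symm

theorem image_rePart_subset (h : AlmostConjugate Γ₁ Γ₂) :
    rePart '' {x | x ∈ Γ₁ ∧ x ≠ 1} ⊆ rePart '' {x | x ∈ Γ₂ ∧ x ≠ 1} := by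
  rintro _ ⟨x, ⟨hx, hx₁⟩, rfl⟩
  obtain ⟨y, hy, hxy⟩ := h.exists_mem_isConj hx
  exact ⟨y, ⟨hy, fun hy₁ => hx₁ (isConj_one_left.1 (hy₁ ▸ hxy))⟩, (rePart_eq_of_isConj hxy).symm⟩

theorem IsMaxRePart.of_almostConjugate (h : IsMaxRePart Γ₁ c) (hΓ : AlmostConjugate Γ₁ Γ₂) :
    IsMaxRePart Γ₂ c := by
  rwa [IsMaxRePart, (image_rePart_subset hΓ.symm).antisymm (image_rePart_subset hΓ)]

theorem generatorTraces_eq_of_almostConjugate (h : AlmostConjugate Γ₁ Γ₂) :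
    generatorTraces Γ₁ c = generatorTraces Γ₂ c := by
  rw [generatorTraces, generatorTraces, h.ncard_eq_of_isConj fun x y hxy => by
    rw [rePart_eq_of_isConj hxy]]

theorem exists_map_conj_eq_of_closure_singleton_eq [Finite Γ₂] (h : AlmostConjugate Γ₁ Γ₂)
    (ha : Subgroup.closure {a} = Γ₁) (ha' : a' ∈ Γ₂) (hre : rePart a = rePart a') :
    ∃ g, Γ₁.map (MulAut.conj g).toMonoidHom = Γ₂ := by
  obtain ⟨g, hg⟩ := exists_conj_eq_of_rePart_eq hre
  refine ⟨g, h.map_conj_eq_of_closure_eq ha ?_⟩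
  rintro _ rfl
  rwa [hg]

end AlmostConjugate

end UnitQuaternion

/-- Any two almost conjugate finite subgroups of `SU(2)` (realized as the group of unit
quaternions) are conjugate in `SU(2)`. -/
theorem almostConjugate_subgroups_of_su2_are_conjugate
    (Γ₁ Γ₂ : Subgroup (unitary (Quaternion ℝ)))
    [Finite Γ₁] [Finite Γ₂] (h : AlmostConjugate Γ₁ Γ₂) :
    ∃ g : unitary (Quaternion ℝ),
      Subgroup.map (MulAut.conj g).toMonoidHom Γ₁ = Γ₂ := by
  rcases eq_or_ne Γ₁ ⊥ with rfl | hΓ₁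
  · exact ⟨1, h.map_conj_eq_of_closure_eq Subgroup.closure_empty (by simp)⟩
  obtain ⟨c, hc₁⟩ := UnitQuaternion.exists_isMaxRePart hΓ₁
  have hc₂ := hc₁.of_almostConjugate h
  obtain ⟨a₁, ha₁, hac₁⟩ := hc₁.exists_mem
  obtain ⟨a₂, ha₂, hac₂⟩ := hc₂.exists_mem
  have hac := hac₁.trans hac₂.symm
  rcases hc₁.closure_eq_or_exists_generatorTraces_eq ha₁ hac₁ with
    hcyc | ⟨b₁, hb₁, hab₁, htr₁, hgen⟩
  · exact UnitQuaternion.exists_map_conj_eq_of_closure_singleton_eq h hcyc ha₂ hac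
  rcases hc₂.closure_eq_or_exists_generatorTraces_eq ha₂ hac₂ with
    hcyc | ⟨b₂, hb₂, hab₂, htr₂, -⟩
  · exact exists_map_conj_eq_symm
      (UnitQuaternion.exists_map_conj_eq_of_closure_singleton_eq h.symm hcyc ha₁ hac.symm)
  rw [UnitQuaternion.generatorTraces_eq_of_almostConjugate h, ← htr₂, Prod.mk.injEq] at htr₁
  obtain ⟨g, hga, hgb⟩ := UnitQuaternion.exists_conj_pair_eq hab₁ hac htr₁.1 htr₁.2
  refine ⟨g, h.map_conj_eq_of_closure_eq hgen ?_⟩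
  rintro _ (rfl | rfl)
  · rwa [hga]
  · rwa [hgb]
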